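/- arXiv:2103.00233 — 6 statements merged into one kernel-verified Lean document; each statement's English description precedes it below -/
import Mathlib

section
/- For every σ > 0, the function α ↦ ψ_G(α;σ) is differentiable on ℝ and its derivative at α equals −Φ((1−α)/σ), where Φ is the standard normal cumulative distribution function. In particular, ψ_G(·;σ) is monotonically decreasing (antitone) on ℝ. -/
open Real Set

/-- The probability density function of the standard normal distribution. -/
noncomputable def stdGaussPDF (v : ℝ) : ℝ :=
  (1 / Real.sqrt (2 * Real.pi)) * Real.exp (-v ^ 2 / 2)

/-- The cumulative distribution function of the standard normal distribution. -/
noncomputable def stdGaussCDF (v : ℝ) : ℝ :=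
  ∫ t in Set.Iic v, stdGaussPDF t

/-- The smooth Hinge loss ψ_G(α;σ) = Φ(v)(1−α) + φ(v)σ with v = (1−α)/σ. -/
noncomputable def psiG (σ α : ℝ) : ℝ :=
  stdGaussCDF ((1 - α) / σ) * (1 - α) + stdGaussPDF ((1 - α) / σ) * σ

/-!
Writing `H v = v Φ(v) + φ(v)`, the product rule and `φ' v = -v φ(v)` give `H' = Φ`. The loss is a
rescaling of this antiderivative, `ψ_G(α;σ) = σ H((1 - α)/σ)`, so the chain rule gives
`∂ψ_G/∂α = -Φ((1 - α)/σ)`, which is nonpositive because `Φ` is an integral of a density.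
-/

open MeasureTheory ProbabilityTheory
open scoped NNReal Topology

section DistributionFunction

variable {E : Type*} [NormedAddCommGroup E] {f : ℝ → E} {b : ℝ}

theorem eventually_integrableOn_Iic {μ : Measure ℝ} (hf : IntegrableOn f (Iic b) μ)
    (hb : IntegrableAtFilter f (𝓝 b) μ) : ∀ᶠ u in 𝓝 b, IntegrableOn f (Iic u) μ := by
  obtain ⟨s, hs, hfs⟩ := hb
  obtain ⟨l, r, hbr, hlr⟩ := mem_nhds_iff_exists_Ioo_subset.1 hs
  filter_upwards [Iio_mem_nhds hbr.2] with u hur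
  refine (hf.union hfs).mono_set fun t htu => ?_
  exact (le_or_gt t b).imp_right fun hbt => hlr ⟨hbr.1.trans hbt, htu.trans_lt hur⟩

theorem hasDerivAt_integral_Iic [NormedSpace ℝ E] [CompleteSpace E] (hf : IntegrableOn f (Iic b))
    (hmeas : StronglyMeasurableAtFilter f (𝓝 b)) (hb : ContinuousAt f b) :
    HasDerivAt (fun u => ∫ t in Iic u, f t) (f b) b := by
  have h_local : IntegrableAtFilter f (𝓝 b) :=
    hb.integrableAtFilter hmeas (volume.finiteAt_nhds b)
  have h_split : (fun u => ∫ t in Iic u, f t) =ᶠ[𝓝 b]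
      fun u => (∫ t in Iic b, f t) + ∫ t in b..u, f t := by
    filter_upwards [eventually_integrableOn_Iic hf h_local] with u hu
    rw [← intervalIntegral.integral_Iic_sub_Iic hf hu, add_sub_cancel]
  refine HasDerivAt.congr_of_eventuallyEq ?_ h_split
  exact (intervalIntegral.integral_hasDerivAt_right .refl hmeas hb).const_add _

end DistributionFunction

theorem hasDerivAt_gaussianPDFReal (μ : ℝ) (v : ℝ≥0) (x : ℝ) :
    HasDerivAt (gaussianPDFReal μ v) (-((x - μ) / v) * gaussianPDFReal μ v x) x := by
  have h_exponent : HasDerivAt (fun y : ℝ => -(y - μ) ^ 2 / (2 * v)) (-((x - μ) / v)) x := by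
    refine ((((hasDerivAt_id x).sub_const μ).pow 2).neg.div_const (2 * (v : ℝ))).congr_deriv ?_
    simp only [id_eq]
    ring
  refine (h_exponent.exp.const_mul (√(2 * π * v))⁻¹).congr_deriv ?_
  rw [gaussianPDFReal]
  ring

theorem stdGaussPDF_eq_gaussianPDFReal : stdGaussPDF = gaussianPDFReal 0 1 := by
  ext v
  simp [stdGaussPDF, gaussianPDFReal]

theorem stdGaussPDF_nonneg (v : ℝ) : 0 ≤ stdGaussPDF v := by
  rw [stdGaussPDF_eq_gaussianPDFReal]
  exact gaussianPDFReal_nonneg 0 1 v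

theorem integrable_stdGaussPDF : Integrable stdGaussPDF := by
  rw [stdGaussPDF_eq_gaussianPDFReal]
  exact integrable_gaussianPDFReal 0 1

theorem hasDerivAt_stdGaussPDF (v : ℝ) : HasDerivAt stdGaussPDF (-v * stdGaussPDF v) v := by
  simpa [stdGaussPDF_eq_gaussianPDFReal] using hasDerivAt_gaussianPDFReal 0 1 v

theorem stdGaussCDF_nonneg (v : ℝ) : 0 ≤ stdGaussCDF v :=
  integral_nonneg stdGaussPDF_nonneg

theorem hasDerivAt_stdGaussCDF (v : ℝ) : HasDerivAt stdGaussCDF (stdGaussPDF v) v :=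
  hasDerivAt_integral_Iic integrable_stdGaussPDF.integrableOn
    integrable_stdGaussPDF.aestronglyMeasurable.stronglyMeasurableAtFilter
    (hasDerivAt_stdGaussPDF v).continuousAt

/-- The antiderivative `v Φ(v) + φ(v)` of the standard normal distribution function `Φ`, which is
the smooth Hinge loss at scale `σ = 1` as a function of `v = 1 - α`. -/
noncomputable def stdGaussCDFPrimitive (v : ℝ) : ℝ :=
  v * stdGaussCDF v + stdGaussPDF v

theorem hasDerivAt_stdGaussCDFPrimitive (v : ℝ) :
    HasDerivAt stdGaussCDFPrimitive (stdGaussCDF v) v := by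
  refine (((hasDerivAt_id v).mul (hasDerivAt_stdGaussCDF v)).add
    (hasDerivAt_stdGaussPDF v)).congr_deriv ?_
  simp only [id_eq]
  ring

theorem psiG_eq_mul_stdGaussCDFPrimitive {σ : ℝ} (hσ : σ ≠ 0) (α : ℝ) :
    psiG σ α = σ * stdGaussCDFPrimitive ((1 - α) / σ) := by
  rw [psiG, stdGaussCDFPrimitive]
  field_simp

theorem hasDerivAt_psiG {σ : ℝ} (hσ : σ ≠ 0) (α : ℝ) :
    HasDerivAt (psiG σ) (-stdGaussCDF ((1 - α) / σ)) α := by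
  have h_arg : HasDerivAt (fun a : ℝ => (1 - a) / σ) (-1 / σ) α :=
    ((hasDerivAt_id α).const_sub 1).div_const σ
  rw [funext (psiG_eq_mul_stdGaussCDFPrimitive hσ)]
  refine (((hasDerivAt_stdGaussCDFPrimitive _).comp α h_arg).const_mul σ).congr_deriv ?_
  field_simp

theorem stmt_2 (σ : ℝ) (hσ : 0 < σ) :
    (∀ α : ℝ, HasDerivAt (psiG σ) (-(stdGaussCDF ((1 - α) / σ))) α) ∧
    Antitone (psiG σ) := by
  have h_deriv := hasDerivAt_psiG hσ.ne'
  exact ⟨h_deriv, antitone_of_hasDerivAt_nonpos h_deriv fun _ =>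
    neg_nonpos.2 (stdGaussCDF_nonneg _)⟩
end

section
/- For every σ > 0 and every α ∈ ℝ, 0 ≤ ψ_M(α;σ) − max{0, 1−α} ≤ σ/2. Moreover the upper bound is attained at α = 1, i.e. ψ_M(1;σ) = σ/2. -/
/-- Φ_M(v) = (1 + v/√(1+v²))/2. -/
noncomputable def PhiM (v : ℝ) : ℝ := (1 + v / Real.sqrt (1 + v ^ 2)) / 2

/-- φ_M(v) = 1/(2√(1+v²)). -/
noncomputable def phiM (v : ℝ) : ℝ := 1 / (2 * Real.sqrt (1 + v ^ 2))

/-- The smooth Hinge loss ψ_M(α;σ) = Φ_M(v)(1−α) + φ_M(v)σ with v = (1−α)/σ. -/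
noncomputable def psiM (σ α : ℝ) : ℝ :=
  PhiM ((1 - α) / σ) * (1 - α) + phiM ((1 - α) / σ) * σ

/-!
The point is that `Φ_M(v) v + φ_M(v) = (v + √(1 + v²)) / 2`. Scaling by `σ` turns `ψ_M(α; σ)` into
`(u + √(σ² + u²)) / 2` with `u = 1 - α`, and the hinge loss is `max 0 u = (u + |u|) / 2`. The gap
is therefore half of `√(σ² + u²) - |u|`, the hypotenuse of a right triangle minus one of its legs,
which lies between `0` and the other leg `σ`.
-/

theorem sqrt_sq_add_sq_le_abs_add_abs (x y : ℝ) : √(x ^ 2 + y ^ 2) ≤ |x| + |y| := by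
  rw [← Complex.norm_add_mul_I]
  simpa using Complex.norm_le_abs_re_add_abs_im (x + y * Complex.I)

theorem PhiM_mul_self_add_phiM (v : ℝ) :
    PhiM v * v + phiM v = (v + √(1 + v ^ 2)) / 2 := by
  have sqrt_ne_zero : √(1 + v ^ 2) ≠ 0 := by positivity
  have sq_sqrt : √(1 + v ^ 2) ^ 2 = 1 + v ^ 2 := Real.sq_sqrt (by positivity)
  rw [PhiM, phiM]
  field_simp
  linear_combination -sq_sqrt

theorem abs_mul_sqrt_one_add_div_sq {x : ℝ} (hx : x ≠ 0) (y : ℝ) :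
    |x| * √(1 + (y / x) ^ 2) = √(x ^ 2 + y ^ 2) := by
  have factor : x ^ 2 + y ^ 2 = x ^ 2 * (1 + (y / x) ^ 2) := by field_simp
  rw [factor, Real.sqrt_mul (sq_nonneg x), Real.sqrt_sq_eq_abs]

theorem psiM_eq_half_add_sqrt {σ : ℝ} (hσ : 0 < σ) (α : ℝ) :
    psiM σ α = ((1 - α) + √(σ ^ 2 + (1 - α) ^ 2)) / 2 := by
  have rescale : σ * ((1 - α) / σ) = 1 - α := mul_div_cancel₀ (1 - α) hσ.ne'
  calc
    psiM σ α = σ * (PhiM ((1 - α) / σ) * ((1 - α) / σ) + phiM ((1 - α) / σ)) := by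
      rw [psiM]
      linear_combination -PhiM ((1 - α) / σ) * rescale
    _ = (σ * ((1 - α) / σ) + σ * √(1 + ((1 - α) / σ) ^ 2)) / 2 := by
      rw [PhiM_mul_self_add_phiM]
      ring
    _ = ((1 - α) + √(σ ^ 2 + (1 - α) ^ 2)) / 2 := by
      rw [rescale, ← abs_mul_sqrt_one_add_div_sq hσ.ne', abs_of_pos hσ]

theorem psiM_sub_max_zero_eq {σ : ℝ} (hσ : 0 < σ) (α : ℝ) :
    psiM σ α - max 0 (1 - α) = (√(σ ^ 2 + (1 - α) ^ 2) - |1 - α|) / 2 := by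
  have hinge_eq : max 0 (1 - α) = (1 - α + |1 - α|) / 2 := by
    simpa [div_eq_inv_mul] using sup_eq_half_smul_add_add_abs_sub' ℝ 0 (1 - α)
  rw [psiM_eq_half_add_sqrt hσ, hinge_eq]
  ring

theorem stmt_6 (σ : ℝ) (hσ : 0 < σ) :
    (∀ α : ℝ,
      0 ≤ psiM σ α - max 0 (1 - α) ∧
      psiM σ α - max 0 (1 - α) ≤ σ / 2) ∧
    psiM σ 1 = σ / 2 := by
  refine ⟨fun α => ?_, ?_⟩
  · have lower : |1 - α| ≤ √(σ ^ 2 + (1 - α) ^ 2) :=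
      Real.abs_le_sqrt (le_add_of_nonneg_left (sq_nonneg σ))
    have upper : √(σ ^ 2 + (1 - α) ^ 2) ≤ σ + |1 - α| := by
      simpa only [abs_of_pos hσ] using sqrt_sq_add_sq_le_abs_add_abs σ (1 - α)
    rw [psiM_sub_max_zero_eq hσ]
    constructor <;> linarith
  · simp [psiM_eq_half_add_sqrt hσ, Real.sqrt_sq hσ.le]
end

section
/- Let θ ∈ ℝ, σ > 0, and let Φ_c, φ_c : ℝ → ℝ be differentiable functions with Φ_c'(v)·v + φ_c'(v) = 0 and Φ_c'(v) ≥ 0 for all v ∈ ℝ. Then the function ψ(α) = Φ_c(v)(θ−α) + φ_c(v)σ with v = (θ−α)/σ is convex on ℝ. -/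
/-! The derivative of `g v = Φ v * v + φ v` is `Φ v + (Φ' v * v + φ' v) = Φ v`, so `g` is convex as
soon as `Φ` is monotone. The loss is the perspective `σ * g ((θ - α) / σ)`, and composing with an
affine map and scaling by `σ ≥ 0` preserve convexity. -/

theorem hasDerivAt_mul_id_add {𝕜 : Type*} [NontriviallyNormedField 𝕜] {Φ φ : 𝕜 → 𝕜} {Φ' φ' v : 𝕜}
    (hΦ : HasDerivAt Φ Φ' v) (hφ : HasDerivAt φ φ' v) (hrel : Φ' * v + φ' = 0) :
    HasDerivAt (fun x ↦ Φ x * x + φ x) (Φ v) v :=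
  ((hΦ.fun_mul (hasDerivAt_id' v)).fun_add hφ).congr_deriv (by linear_combination hrel)

theorem convexOn_mul_id_add_of_monotoneOn {D : Set ℝ} (hD : Convex ℝ D) {Φ φ : ℝ → ℝ}
    (hΦc : ContinuousOn Φ D) (hφc : ContinuousOn φ D)
    (hΦ : DifferentiableOn ℝ Φ (interior D)) (hφ : DifferentiableOn ℝ φ (interior D))
    (hrel : ∀ v ∈ interior D, deriv Φ v * v + deriv φ v = 0)
    (hmono : MonotoneOn Φ (interior D)) :
    ConvexOn ℝ D (fun v ↦ Φ v * v + φ v) := by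
  have hderiv : ∀ v ∈ interior D, HasDerivAt (fun x ↦ Φ x * x + φ x) (Φ v) v := fun v hv ↦
    have hnhds : interior D ∈ nhds v := isOpen_interior.mem_nhds hv
    hasDerivAt_mul_id_add (hΦ.hasDerivAt hnhds) (hφ.hasDerivAt hnhds) (hrel v hv)
  exact MonotoneOn.convexOn_of_deriv hD ((hΦc.mul continuousOn_id).add hφc)
    (fun v hv ↦ (hderiv v hv).differentiableAt.differentiableWithinAt)
    (hmono.congr fun v hv ↦ (hderiv v hv).deriv.symm)

theorem convexOn_smul_comp_inv_smul_const_sub {𝕜 E β : Type*}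
    [Field 𝕜] [LinearOrder 𝕜] [IsStrictOrderedRing 𝕜] [AddCommGroup E] [Module 𝕜 E]
    [AddCommMonoid β] [PartialOrder β] [IsOrderedAddMonoid β] [Module 𝕜 β] [PosSMulMono 𝕜 β]
    {s : Set E} {g : E → β} (hg : ConvexOn 𝕜 s g) (θ : E) {σ : 𝕜} (hσ : 0 ≤ σ) :
    ConvexOn 𝕜 ((fun x ↦ σ⁻¹ • (θ - x)) ⁻¹' s) (fun x ↦ σ • g (σ⁻¹ • (θ - x))) :=
  (hg.comp_affineMap (σ⁻¹ • (AffineMap.const 𝕜 E θ - AffineMap.id 𝕜 E))).smul hσ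

theorem stmt_9 (θ σ : ℝ) (hσ : 0 < σ) (Φc φc : ℝ → ℝ)
    (hΦ : Differentiable ℝ Φc) (hφ : Differentiable ℝ φc)
    (hrel : ∀ v : ℝ, deriv Φc v * v + deriv φc v = 0)
    (hpos : ∀ v : ℝ, 0 ≤ deriv Φc v) :
    ConvexOn ℝ Set.univ
      (fun α : ℝ => Φc ((θ - α) / σ) * (θ - α) + φc ((θ - α) / σ) * σ) := by
  have hmono : Monotone Φc := monotone_of_deriv_nonneg hΦ hpos
  have hconv : ConvexOn ℝ Set.univ (fun v ↦ Φc v * v + φc v) :=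
    convexOn_mul_id_add_of_monotoneOn convex_univ hΦ.continuous.continuousOn
      hφ.continuous.continuousOn hΦ.differentiableOn hφ.differentiableOn
      (fun v _ ↦ hrel v) (hmono.monotoneOn _)
  refine (convexOn_smul_comp_inv_smul_const_sub hconv θ hσ.le).congr fun α _ ↦ ?_
  simp only [smul_eq_mul, inv_mul_eq_div]
  field_simp
end

section
/- Let θ ∈ ℝ, σ > 0, μ > 0, and let Φ_c, φ_c : ℝ → ℝ be differentiable functions with Φ_c'(v)·v + φ_c'(v) = 0 and 0 ≤ Φ_c'(v) ≤ μσ for all v ∈ ℝ. Then ψ(α) = Φ_c(v)(θ−α) + φ_c(v)σ with v = (θ−α)/σ is μ-smooth: |ψ'(α) − ψ'(β)| ≤ μ|α−β| for all α, β ∈ ℝ. -/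
/-!
Put `h v = v Φ(v) + φ(v)`. The relation `v Φ'(v) + φ'(v) = 0` says exactly that `h' = Φ`, and the
loss is the rescaling `ψ α = σ h ((θ - α) / σ)`, so `ψ' α = -Φ ((θ - α) / σ)`. By the mean value
inequality `Φ` is Lipschitz with constant `μ |σ|`, and the inner scaling by `1 / σ` turns this
constant into `μ`.
-/

section Derivative

variable {𝕜 E : Type*} [NontriviallyNormedField 𝕜] [NormedAddCommGroup E] [NormedSpace 𝕜 E]

/-- The general smooth loss with location `θ` and scale `σ`, for functions with values in a normed
space; the paper's `ψ`, with `Φ_c = Φ` and `φ_c = φ`, is the case `𝕜 = E = ℝ`. -/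
def smoothLoss (θ σ : 𝕜) (Φ φ : 𝕜 → E) (α : 𝕜) : E :=
  (θ - α) • Φ ((θ - α) / σ) + σ • φ ((θ - α) / σ)

theorem smoothLoss_eq_smul {σ : 𝕜} (hσ : σ ≠ 0) (θ : 𝕜) (Φ φ : 𝕜 → E) (α : 𝕜) :
    smoothLoss θ σ Φ φ α =
      σ • (((θ - α) / σ) • Φ ((θ - α) / σ) + φ ((θ - α) / σ)) := by
  rw [smoothLoss, smul_add, smul_smul, mul_div_cancel₀ _ hσ]

theorem hasDerivAt_smul_comp_sub_div {σ : 𝕜} (hσ : σ ≠ 0) {θ α : 𝕜} {h : 𝕜 → E} {h' : E}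
    (hh : HasDerivAt h h' ((θ - α) / σ)) :
    HasDerivAt (fun a ↦ σ • h ((θ - a) / σ)) (-h') α := by
  have hinner : HasDerivAt (fun a ↦ (θ - a) / σ) (-1 / σ) α :=
    ((hasDerivAt_id α).const_sub θ).div_const σ
  have hcomp := (hh.scomp α hinner).const_smul σ
  rwa [smul_smul, mul_div_cancel₀ _ hσ, neg_one_smul] at hcomp

theorem hasDerivAt_smul_add_of_smul_add_eq_zero {Φ φ : 𝕜 → E} {v : 𝕜} {Φ' φ' : E}
    (hΦ : HasDerivAt Φ Φ' v) (hφ : HasDerivAt φ φ' v) (hrel : v • Φ' + φ' = 0) :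
    HasDerivAt (fun x ↦ x • Φ x + φ x) (Φ v) v := by
  have hsum := ((hasDerivAt_id v).smul hΦ).add hφ
  rwa [add_right_comm, id_eq, hrel, zero_add, one_smul] at hsum

theorem hasDerivAt_smoothLoss {θ σ α : 𝕜} (hσ : σ ≠ 0) {Φ φ : 𝕜 → E} {Φ' φ' : E}
    (hΦ : HasDerivAt Φ Φ' ((θ - α) / σ)) (hφ : HasDerivAt φ φ' ((θ - α) / σ))
    (hrel : ((θ - α) / σ) • Φ' + φ' = 0) :
    HasDerivAt (smoothLoss θ σ Φ φ) (-Φ ((θ - α) / σ)) α := by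
  rw [funext (smoothLoss_eq_smul hσ θ Φ φ)]
  exact hasDerivAt_smul_comp_sub_div hσ (hasDerivAt_smul_add_of_smul_add_eq_zero hΦ hφ hrel)

end Derivative

theorem norm_comp_sub_div_sub_le {𝕜 E : Type*} [NormedField 𝕜] [SeminormedAddCommGroup E]
    {σ : 𝕜} (hσ : σ ≠ 0) {μ : ℝ} {f : 𝕜 → E}
    (hf : ∀ x y, ‖f x - f y‖ ≤ μ * ‖σ‖ * ‖x - y‖) (θ α β : 𝕜) :
    ‖f ((θ - α) / σ) - f ((θ - β) / σ)‖ ≤ μ * ‖α - β‖ :=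
  calc
    ‖f ((θ - α) / σ) - f ((θ - β) / σ)‖ ≤ μ * ‖σ‖ * ‖(θ - α) / σ - (θ - β) / σ‖ := hf _ _
    _ = μ * ‖σ‖ * (‖α - β‖ / ‖σ‖) := by
      rw [← sub_div, sub_sub_sub_cancel_left, norm_div, norm_sub_rev]
    _ = μ * ‖α - β‖ := by rw [mul_assoc, mul_div_cancel₀ _ (norm_ne_zero_iff.mpr hσ)]

theorem stmt_11_general {𝕜 E : Type*} [RCLike 𝕜] [NormedAddCommGroup E] [NormedSpace 𝕜 E]
    {θ σ : 𝕜} (hσ : σ ≠ 0) {μ : ℝ} {Φ φ : 𝕜 → E}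
    (hΦ : Differentiable 𝕜 Φ) (hφ : Differentiable 𝕜 φ)
    (hrel : ∀ v, v • deriv Φ v + deriv φ v = 0) (hbound : ∀ v, ‖deriv Φ v‖ ≤ μ * ‖σ‖) (α β : 𝕜) :
    ‖deriv (smoothLoss θ σ Φ φ) α - deriv (smoothLoss θ σ Φ φ) β‖ ≤ μ * ‖α - β‖ := by
  have hderiv (a : 𝕜) : deriv (smoothLoss θ σ Φ φ) a = -Φ ((θ - a) / σ) :=
    (hasDerivAt_smoothLoss hσ (hΦ _).hasDerivAt (hφ _).hasDerivAt (hrel _)).deriv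
  have hlip (x y : 𝕜) : ‖Φ x - Φ y‖ ≤ μ * ‖σ‖ * ‖x - y‖ :=
    convex_univ.norm_image_sub_le_of_norm_deriv_le (fun v _ ↦ hΦ v) (fun v _ ↦ hbound v)
      (Set.mem_univ y) (Set.mem_univ x)
  rw [hderiv, hderiv, neg_sub_neg, norm_sub_rev]
  exact norm_comp_sub_div_sub_le hσ hlip θ α β

theorem stmt_11 (θ σ μ : ℝ) (hσ : 0 < σ) (hμ : 0 < μ) (Φc φc : ℝ → ℝ)
    (hΦ : Differentiable ℝ Φc) (hφ : Differentiable ℝ φc)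
    (hrel : ∀ v : ℝ, deriv Φc v * v + deriv φc v = 0)
    (hpos : ∀ v : ℝ, 0 ≤ deriv Φc v) (hup : ∀ v : ℝ, deriv Φc v ≤ μ * σ)
    (ψ : ℝ → ℝ)
    (hψ : ∀ α : ℝ, ψ α = Φc ((θ - α) / σ) * (θ - α) + φc ((θ - α) / σ) * σ) :
    ∀ α β : ℝ, |deriv ψ α - deriv ψ β| ≤ μ * |α - β| := by
  obtain rfl : ψ = smoothLoss θ σ Φc φc := funext fun α ↦ by simp [hψ, smoothLoss, mul_comm]
  exact stmt_11_general hσ.ne' hΦ hφ (by simpa [mul_comm] using hrel) fun v ↦ by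
    simpa [abs_of_nonneg (hpos v), abs_of_pos hσ] using hup v
end

section
/- Let θ ∈ ℝ, σ > 0, and let Φ_c, φ_c : ℝ → ℝ be differentiable functions with Φ_c'(v)·v + φ_c'(v) = 0 for all v ∈ ℝ and Φ_c(θ/σ) > 0. Then ψ(α) = Φ_c(v)(θ−α) + φ_c(v)σ with v = (θ−α)/σ is differentiable at 0 with ψ'(0) = −Φ_c(θ/σ) < 0 (which, with convexity, is the Bartlett criterion for ψ to be classification-calibrated). -/
/-! The loss is the perspective `σ F(v)`, `v = (θ - α) / σ`, of the one-variable function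
`F(v) = v Φ(v) + φ(v)`. The relation between `Φ'` and `φ'` says exactly that `F' = Φ`, and the
factor `σ` cancels the scaling of `dv/dα = -1 / σ`, so that `dψ/dα = -Φ(v)`. -/

section

variable {𝕜 E : Type*} [NontriviallyNormedField 𝕜] [NormedAddCommGroup E] [NormedSpace 𝕜 E]

theorem hasDerivAt_id_smul_add_of_smul_add_eq_zero {Φ φ : 𝕜 → E} {Φ' φ' : E} {v : 𝕜}
    (hΦ : HasDerivAt Φ Φ' v) (hφ : HasDerivAt φ φ' v) (hrel : v • Φ' + φ' = 0) :
    HasDerivAt (fun u ↦ u • Φ u + φ u) (Φ v) v := by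
  refine (((hasDerivAt_id v).smul hΦ).add hφ).congr_deriv ?_
  calc v • Φ' + (1 : 𝕜) • Φ v + φ' = Φ v + (v • Φ' + φ') := by rw [one_smul]; abel
    _ = Φ v := by rw [hrel, add_zero]

theorem hasDerivAt_smul_comp_const_sub_div {F : 𝕜 → E} {F' : E} {θ σ α : 𝕜} (hσ : σ ≠ 0)
    (hF : HasDerivAt F F' ((θ - α) / σ)) :
    HasDerivAt (fun β ↦ σ • F ((θ - β) / σ)) (-F') α := by
  have hv : HasDerivAt (fun β ↦ (θ - β) / σ) (-1 / σ) α :=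
    ((hasDerivAt_id α).const_sub θ).div_const σ
  refine ((hF.scomp α hv).const_smul σ).congr_deriv ?_
  rw [smul_smul, mul_div_cancel₀ _ hσ, neg_one_smul]

theorem stmt_12_general {Φ φ : 𝕜 → E} {Φ' φ' : E} {θ σ α : 𝕜} (hσ : σ ≠ 0)
    (hΦ : HasDerivAt Φ Φ' ((θ - α) / σ)) (hφ : HasDerivAt φ φ' ((θ - α) / σ))
    (hrel : ((θ - α) / σ) • Φ' + φ' = 0) :
    HasDerivAt (fun β ↦ (θ - β) • Φ ((θ - β) / σ) + σ • φ ((θ - β) / σ))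
      (-Φ ((θ - α) / σ)) α := by
  have hψ := hasDerivAt_smul_comp_const_sub_div hσ
    (hasDerivAt_id_smul_add_of_smul_add_eq_zero hΦ hφ hrel)
  simpa only [smul_add, smul_smul, mul_div_cancel₀ _ hσ] using hψ

end

theorem stmt_12 (θ σ : ℝ) (hσ : 0 < σ) (Φc φc : ℝ → ℝ)
    (hΦ : Differentiable ℝ Φc) (hφ : Differentiable ℝ φc)
    (hrel : ∀ v : ℝ, deriv Φc v * v + deriv φc v = 0)
    (hcal : 0 < Φc (θ / σ)) :
    HasDerivAt (fun α : ℝ => Φc ((θ - α) / σ) * (θ - α) + φc ((θ - α) / σ) * σ)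
      (-Φc (θ / σ)) 0 ∧ -Φc (θ / σ) < 0 := by
  refine ⟨?_, neg_neg_of_pos hcal⟩
  simpa only [smul_eq_mul, mul_comm, sub_zero] using stmt_12_general (α := 0) hσ.ne'
    (hΦ _).hasDerivAt (hφ _).hasDerivAt (by simpa only [smul_eq_mul, mul_comm] using hrel _)
end

section
/- Let θ ∈ ℝ, σ > 0, and let Φ_c, φ_c : ℝ → ℝ be differentiable functions with Φ_c'(v)·v + φ_c'(v) = 0 and Φ_c'(v) ≥ 0 for all v ∈ ℝ, and define ψ(α) = Φ_c(v)(θ−α) + φ_c(v)σ with v = (θ−α)/σ. Let β ∈ ℝ and suppose v⋆ ∈ ℝ satisfies Φ_c(v⋆) = −β. Then for all α ∈ ℝ, βα − ψ(α) ≤ βθ − φ_c(v⋆)σ, with equality when α = θ − σv⋆; consequently the convex conjugate of ψ satisfies ψ*(β) = sup_α(βα − ψ(α)) = βθ − φ_c(v⋆)σ. -/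
/-!
Put `F v = Φ_c v * v + φ_c v`. The relation between `Φ_c'` and `φ_c'` says exactly that `F' = Φ_c`,
which is monotone, so `F` is convex and lies above its tangent line at `v⋆`; hence
`F* (Φ_c v⋆) = Φ_c v⋆ * v⋆ - F v⋆ = -φ_c v⋆`. Since `ψ α = σ * F ((θ - α) / σ)`, the conjugates are
related by `ψ* β = β * θ + σ * F* (-β)`.
-/

open Set

section Field

variable {K : Type*} [Field K] (f : K → K) (β θ : K) {σ : K}

theorem mul_sub_rescale_eq (hσ : σ ≠ 0) (α : K) :
    β * α - σ * f ((θ - α) / σ) = β * θ + σ * (-β * ((θ - α) / σ) - f ((θ - α) / σ)) := by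
  field

theorem mul_sub_rescale_apply_sub_mul (hσ : σ ≠ 0) (v : K) :
    β * (θ - σ * v) - σ * f ((θ - (θ - σ * v)) / σ) = β * θ + σ * (-β * v - f v) := by
  have hv : (θ - (θ - σ * v)) / σ = v := by field
  rw [mul_sub_rescale_eq f β θ hσ, hv]

variable {f β} in
theorem isMaxOn_mul_sub_rescale [LinearOrder K] [IsStrictOrderedRing K] {v : K}
    (hσ : 0 < σ) (hv : IsMaxOn (fun x ↦ -β * x - f x) univ v) :
    IsMaxOn (fun α ↦ β * α - σ * f ((θ - α) / σ)) univ (θ - σ * v) := by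
  refine isMaxOn_univ_iff.2 fun α ↦ ?_
  rw [mul_sub_rescale_apply_sub_mul f β θ hσ.ne', mul_sub_rescale_eq f β θ hσ.ne']
  gcongr _ + σ * ?_
  exact isMaxOn_univ_iff.1 hv _

end Field

theorem isMaxOn_mul_sub_of_convexOn_of_hasDerivWithinAt {S : Set ℝ} {f : ℝ → ℝ} {p v : ℝ}
    (hf : ConvexOn ℝ S f) (hv : v ∈ S) (hp : HasDerivWithinAt f p S v) :
    IsMaxOn (fun x ↦ p * x - f x) S v := by
  intro x hx
  change p * x - f x ≤ p * v - f v
  rcases lt_trichotomy x v with hxv | rfl | hvx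
  · have hslope : (f v - f x) / (v - x) ≤ p := by
      simpa only [slope_def_field] using hf.slope_le_of_hasDerivWithinAt hx hv hxv hp
    rw [div_le_iff₀ (sub_pos.2 hxv)] at hslope
    linarith
  · exact le_rfl
  · have hslope : p ≤ (f x - f v) / (x - v) := by
      simpa only [slope_def_field] using hf.le_slope_of_hasDerivWithinAt hv hx hvx hp
    rw [le_div_iff₀ (sub_pos.2 hvx)] at hslope
    linarith

theorem convexOn_univ_of_hasDerivAt_of_monotone {f f' : ℝ → ℝ}
    (hf : ∀ x, HasDerivAt f (f' x) x) (hf' : Monotone f') : ConvexOn ℝ univ f := by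
  refine Monotone.convexOn_univ_of_deriv (fun x ↦ (hf x).differentiableAt) ?_
  rwa [funext fun x ↦ (hf x).deriv]

theorem hasDerivAt_mul_self_add {𝕜 : Type*} [NontriviallyNormedField 𝕜] {Φ φ : 𝕜 → 𝕜}
    {Φ' φ' v : 𝕜} (hΦ : HasDerivAt Φ Φ' v) (hφ : HasDerivAt φ φ' v) (hrel : Φ' * v + φ' = 0) :
    HasDerivAt (fun w ↦ Φ w * w + φ w) (Φ v) v := by
  refine ((hΦ.fun_mul (hasDerivAt_id' v)).fun_add hφ).congr_deriv ?_
  linear_combination hrel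

theorem stmt_13 (θ σ : ℝ) (hσ : 0 < σ) (Φc φc : ℝ → ℝ)
    (hΦ : Differentiable ℝ Φc) (hφ : Differentiable ℝ φc)
    (hrel : ∀ v : ℝ, deriv Φc v * v + deriv φc v = 0)
    (hpos : ∀ v : ℝ, 0 ≤ deriv Φc v)
    (ψ : ℝ → ℝ)
    (hψ : ∀ α : ℝ, ψ α = Φc ((θ - α) / σ) * (θ - α) + φc ((θ - α) / σ) * σ)
    (β vstar : ℝ) (hvstar : Φc vstar = -β) :
    (∀ α : ℝ, β * α - ψ α ≤ β * θ - φc vstar * σ) ∧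
    (β * (θ - σ * vstar) - ψ (θ - σ * vstar) = β * θ - φc vstar * σ) ∧
    (⨆ α : ℝ, (β * α - ψ α)) = β * θ - φc vstar * σ := by
  let F : ℝ → ℝ := fun v ↦ Φc v * v + φc v
  have hF (v : ℝ) : HasDerivAt F (Φc v) v :=
    hasDerivAt_mul_self_add (hΦ v).hasDerivAt (hφ v).hasDerivAt (hrel v)
  have hconvex : ConvexOn ℝ univ F :=
    convexOn_univ_of_hasDerivAt_of_monotone hF (monotone_of_deriv_nonneg hΦ hpos)
  have hψF : ψ = fun α ↦ σ * F ((θ - α) / σ) := by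
    funext α
    simp only [hψ, F]
    field
  have hmax : IsMaxOn (fun α ↦ β * α - ψ α) univ (θ - σ * vstar) := by
    rw [hψF]
    exact isMaxOn_mul_sub_rescale θ hσ <| isMaxOn_mul_sub_of_convexOn_of_hasDerivWithinAt hconvex
      (mem_univ _) (hvstar ▸ (hF vstar).hasDerivWithinAt)
  have hvalue : β * (θ - σ * vstar) - ψ (θ - σ * vstar) = β * θ - φc vstar * σ := by
    rw [hψF, mul_sub_rescale_apply_sub_mul F β θ hσ.ne']
    simp only [F, hvstar]
    ring
  have hle (α : ℝ) : β * α - ψ α ≤ β * θ - φc vstar * σ :=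
    (isMaxOn_univ_iff.1 hmax α).trans_eq hvalue
  have hgreatest : IsGreatest (range fun α ↦ β * α - ψ α) (β * θ - φc vstar * σ) :=
    ⟨⟨_, hvalue⟩, forall_mem_range.2 hle⟩
  exact ⟨hle, hvalue, hgreatest.csSup_eq⟩
end
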